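/- arXiv:1405.4324 — 4 statements merged into one kernel-verified Lean document; each statement's English description precedes it below -/
import Mathlib

section
/- Let S ⊆ V and let ω_c(S) = inf{ω(φ) : φ ∈ L2(S^c), φ ≠ 0} (with ω_c(S) = +∞ if L2(S^c) = {0}). Then every signal f ∈ PW_ω(G) can be perfectly recovered from its samples on S — i.e., the restriction map f ↦ f(S) is injective on PW_ω(G) — if and only if ω < ω_c(S). -/
open Matrix

noncomputable section

/-- The bandwidth `ω(φ)` of a signal `φ`: the largest eigenvalue `lam i` such that the
component of `φ` along the eigenvector `u i` is nonzero. -/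
def bandwidth {N : ℕ} (lam : Fin N → ℝ) (u : Fin N → Fin N → ℝ) (φ : Fin N → ℝ) : ℝ :=
  sSup {r : ℝ | ∃ i, r = lam i ∧ φ ⬝ᵥ u i ≠ 0}

/-- The Paley–Wiener space `PW_ω(G)`: the span of the eigenvectors with eigenvalue at most `ω`. -/
def PW {N : ℕ} (lam : Fin N → ℝ) (u : Fin N → Fin N → ℝ) (ω : ℝ) :
    Submodule ℝ (Fin N → ℝ) :=
  Submodule.span ℝ (u '' {i | lam i ≤ ω})

/-- The cut-off frequency `ω_c(S)`: the infimum (in `EReal`, so `⊤` if the set is empty) of the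
bandwidths of nonzero signals vanishing on `S`. -/
def cutoffFreq {N : ℕ} (lam : Fin N → ℝ) (u : Fin N → Fin N → ℝ) (S : Set (Fin N)) : EReal :=
  sInf {r : EReal |
    ∃ φ : Fin N → ℝ, φ ≠ 0 ∧ (∀ i ∈ S, φ i = 0) ∧ r = ((bandwidth lam u φ : ℝ) : EReal)}

/-- A signal is the sum of its components along an orthonormal family of full size. -/
lemma sum_dotProduct_smul {N : ℕ} {u : Fin N → Fin N → ℝ}
    (horth : ∀ i j, u i ⬝ᵥ u j = if i = j then (1 : ℝ) else 0) (φ : Fin N → ℝ) :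
    ∑ i, (φ ⬝ᵥ u i) • u i = φ := by
  have hU : Matrix.of u * (Matrix.of u)ᵀ = 1 := by
    ext i j
    simpa [Matrix.mul_apply, dotProduct, Matrix.one_apply] using horth i j
  have hU' : (Matrix.of u)ᵀ * Matrix.of u = 1 := mul_eq_one_comm.mp hU
  calc ∑ i, (φ ⬝ᵥ u i) • u i = (φ ᵥ* (Matrix.of u)ᵀ) ᵥ* Matrix.of u := by
        ext j
        simp [Matrix.vecMul, dotProduct]
    _ = φ := by rw [Matrix.vecMul_vecMul, hU', Matrix.vecMul_one]

lemma mem_PW_iff {N : ℕ} {lam : Fin N → ℝ} {u : Fin N → Fin N → ℝ}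
    (horth : ∀ i j, u i ⬝ᵥ u j = if i = j then (1 : ℝ) else 0) {ω : ℝ} {φ : Fin N → ℝ} :
    φ ∈ PW lam u ω ↔ ∀ i, φ ⬝ᵥ u i ≠ 0 → lam i ≤ ω := by
  constructor
  · intro hφ i
    contrapose!
    intro hi
    induction hφ using Submodule.span_induction with
    | mem x hx =>
      obtain ⟨j, hj, rfl⟩ := hx
      have hji : j ≠ i := by
        rintro rfl
        exact absurd hj (not_le.mpr hi)
      simp [horth, hji]
    | zero => simp
    | add x y _ _ hx hy => simp [add_dotProduct, hx, hy]
    | smul a x _ hx => simp [smul_dotProduct, hx]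
  · intro h
    rw [← sum_dotProduct_smul horth φ]
    refine Submodule.sum_mem _ fun i _ => ?_
    by_cases hi : φ ⬝ᵥ u i = 0
    · simp [hi]
    · exact Submodule.smul_mem _ _ (Submodule.subset_span ⟨i, h i hi, rfl⟩)

lemma finite_bandwidth_set {N : ℕ} (lam : Fin N → ℝ) (u : Fin N → Fin N → ℝ)
    (φ : Fin N → ℝ) : {r : ℝ | ∃ i, r = lam i ∧ φ ⬝ᵥ u i ≠ 0}.Finite := by
  refine (Set.finite_range lam).subset ?_
  rintro r ⟨i, rfl, -⟩
  exact ⟨i, rfl⟩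

lemma bandwidth_le_iff_mem_PW {N : ℕ} {lam : Fin N → ℝ} {u : Fin N → Fin N → ℝ}
    (horth : ∀ i j, u i ⬝ᵥ u j = if i = j then (1 : ℝ) else 0) {ω : ℝ} (hω : 0 ≤ ω)
    {φ : Fin N → ℝ} : bandwidth lam u φ ≤ ω ↔ φ ∈ PW lam u ω := by
  rw [mem_PW_iff horth]
  constructor
  · intro h i hi
    exact (le_csSup (finite_bandwidth_set lam u φ).bddAbove ⟨i, rfl, hi⟩).trans h
  · intro h
    refine Real.sSup_le ?_ hω
    rintro r ⟨i, rfl, hi⟩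
    exact h i hi

lemma bandwidth_mem_range {N : ℕ} {lam : Fin N → ℝ} {u : Fin N → Fin N → ℝ}
    (horth : ∀ i j, u i ⬝ᵥ u j = if i = j then (1 : ℝ) else 0)
    {φ : Fin N → ℝ} (hφ : φ ≠ 0) : bandwidth lam u φ ∈ Set.range lam := by
  have hne : {r : ℝ | ∃ i, r = lam i ∧ φ ⬝ᵥ u i ≠ 0}.Nonempty := by
    by_contra hempty
    refine hφ ?_
    rw [← sum_dotProduct_smul horth φ]
    refine Finset.sum_eq_zero fun i _ => ?_
    by_cases hi : φ ⬝ᵥ u i = 0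
    · simp [hi]
    · exact absurd ⟨lam i, i, rfl, hi⟩ hempty
  obtain ⟨i, hi, -⟩ := hne.csSup_mem (finite_bandwidth_set lam u φ)
  exact ⟨i, hi.symm⟩

/-- The cut-off frequency is attained: it exceeds `ω` as soon as every bandwidth does. -/
lemma lt_cutoffFreq_iff {N : ℕ} {lam : Fin N → ℝ} {u : Fin N → Fin N → ℝ}
    (horth : ∀ i j, u i ⬝ᵥ u j = if i = j then (1 : ℝ) else 0) {S : Set (Fin N)} {ω : ℝ} :
    (ω : EReal) < cutoffFreq lam u S ↔
      ∀ φ : Fin N → ℝ, φ ≠ 0 → (∀ i ∈ S, φ i = 0) → ω < bandwidth lam u φ := by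
  constructor
  · intro h φ hφ hS
    exact EReal.coe_lt_coe_iff.mp (h.trans_le (sInf_le ⟨φ, hφ, hS, rfl⟩))
  · intro h
    unfold cutoffFreq
    set B : Set EReal := {r : EReal |
      ∃ φ : Fin N → ℝ, φ ≠ 0 ∧ (∀ i ∈ S, φ i = 0) ∧ r = ((bandwidth lam u φ : ℝ) : EReal)}
    have hfin : B.Finite := by
      refine ((Set.finite_range lam).image ((↑) : ℝ → EReal)).subset ?_
      rintro r ⟨φ, hφ, -, rfl⟩
      exact ⟨_, bandwidth_mem_range horth hφ, rfl⟩
    rcases B.eq_empty_or_nonempty with hemp | hne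
    · rw [hemp, sInf_empty]
      exact EReal.coe_lt_top ω
    · obtain ⟨φ, hφ, hS, hr⟩ := hne.csInf_mem hfin
      rw [hr]
      exact EReal.coe_lt_coe_iff.mpr (h φ hφ hS)

/-- **Sampling theorem.** Every `f ∈ PW_ω(G)` is perfectly recoverable from its samples on `S`
(i.e. the restriction map `f ↦ f(S)` is injective on `PW_ω(G)`) iff `ω < ω_c(S)`. -/
theorem sampling_theorem {N : ℕ}
    (L : Matrix (Fin N) (Fin N) ℝ) (hsymm : L.IsSymm)
    (lam : Fin N → ℝ) (u : Fin N → Fin N → ℝ)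
    (hlam_nonneg : ∀ i, 0 ≤ lam i) (hlam_mono : Monotone lam)
    (heig : ∀ i, L *ᵥ u i = lam i • u i)
    (horth : ∀ i j, u i ⬝ᵥ u j = if i = j then (1 : ℝ) else 0)
    (S : Set (Fin N)) (ω : ℝ) (hω : 0 ≤ ω) :
    (∀ f ∈ PW lam u ω, ∀ g ∈ PW lam u ω, (∀ i ∈ S, f i = g i) → f = g) ↔
      (ω : EReal) < cutoffFreq lam u S := by
  rw [lt_cutoffFreq_iff horth]
  constructor
  · intro h φ hφ hS
    by_contra! hle
    exact hφ (h φ ((bandwidth_le_iff_mem_PW horth hω).mp hle) 0 (Submodule.zero_mem _) hS)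
  · intro h f hf g hg hfg
    by_contra hne
    have hlt := h (f - g) (sub_ne_zero.mpr hne) fun i hi => by simp [hfg i hi]
    exact hlt.not_ge ((bandwidth_le_iff_mem_PW horth hω).mpr (Submodule.sub_mem _ hf hg))

end
end

section
/- Let L be a real symmetric positive semidefinite N×N matrix and φ ∈ R^N a nonzero vector. Then the estimated bandwidth ω_k(φ) = (φᵗL^kφ / φᵗφ)^{1/k} is nondecreasing in the positive integer k, i.e., ω_k(φ) ≤ ω_{k+1}(φ) for every k ≥ 1. -/
open Matrix

noncomputable section

/-- The quadratic form of a power of a real symmetric matrix, in an orthonormal eigenbasis. -/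
theorem Matrix.IsHermitian.dotProduct_pow_mulVec {n : Type*} [Fintype n] [DecidableEq n]
    {A : Matrix n n ℝ} (hA : A.IsHermitian) (x : n → ℝ) (k : ℕ) :
    x ⬝ᵥ (A ^ k) *ᵥ x =
      ∑ i, (star (hA.eigenvectorUnitary : Matrix n n ℝ) *ᵥ x) i ^ 2 * hA.eigenvalues i ^ k := by
  have hpow : A ^ k = (hA.eigenvectorUnitary : Matrix n n ℝ) *
      diagonal (fun i => hA.eigenvalues i ^ k) *
        star (hA.eigenvectorUnitary : Matrix n n ℝ) := by
    conv_lhs => rw [hA.spectral_theorem, ← map_pow, Unitary.conjStarAlgAut_apply, diagonal_pow]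
    rfl
  rw [hpow, ← mulVec_mulVec, ← mulVec_mulVec, dotProduct_mulVec, ← mulVec_transpose,
    star_eq_conjTranspose, conjTranspose_eq_transpose_of_trivial]
  simp only [dotProduct, mulVec_diagonal]
  exact Finset.sum_congr rfl fun i _ => by ring

/-- The power means of natural order, with respect to normalized nonnegative weights, are
nondecreasing in the order. -/
theorem rpow_one_div_sum_mul_pow_le_succ {ι : Type*} (s : Finset ι) (w z : ι → ℝ)
    (hw : ∀ i ∈ s, 0 ≤ w i) (hw' : ∑ i ∈ s, w i = 1) (hz : ∀ i ∈ s, 0 ≤ z i)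
    {k : ℕ} (hk : 1 ≤ k) :
    (∑ i ∈ s, w i * z i ^ k) ^ ((1 : ℝ) / k) ≤
      (∑ i ∈ s, w i * z i ^ (k + 1)) ^ ((1 : ℝ) / (k + 1)) := by
  have hk0 : (0 : ℝ) < k := by exact_mod_cast hk
  have hsum : 0 ≤ ∑ i ∈ s, w i * z i ^ k :=
    Finset.sum_nonneg fun i hi => mul_nonneg (hw i hi) (pow_nonneg (hz i hi) k)
  have hjensen := Real.rpow_arith_mean_le_arith_mean_rpow s w (fun i => z i ^ k) hw hw'
    (fun i hi => pow_nonneg (hz i hi) k) (p := ((k : ℝ) + 1) / k)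
    ((one_le_div hk0).2 (by linarith))
  have hterm : ∑ i ∈ s, w i * (z i ^ k) ^ (((k : ℝ) + 1) / k) =
      ∑ i ∈ s, w i * z i ^ (k + 1) := by
    refine Finset.sum_congr rfl fun i hi => ?_
    rw [← Real.rpow_natCast, ← Real.rpow_mul (hz i hi), mul_div_cancel₀ _ hk0.ne',
      ← Real.rpow_natCast (z i) (k + 1)]
    push_cast
    rfl
  rw [hterm] at hjensen
  calc (∑ i ∈ s, w i * z i ^ k) ^ ((1 : ℝ) / k)
      = ((∑ i ∈ s, w i * z i ^ k) ^ (((k : ℝ) + 1) / k)) ^ ((1 : ℝ) / (k + 1)) := by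
        rw [← Real.rpow_mul hsum]
        congr 1
        field_simp
    _ ≤ _ := Real.rpow_le_rpow (Real.rpow_nonneg hsum _) hjensen (by positivity)

/-- **Monotonicity of the estimated bandwidth in `k`.** For a real symmetric positive
semidefinite matrix `L` and a nonzero vector `φ`, the estimated bandwidth
`ω_k(φ) = (φᵗ L^k φ / φᵗ φ)^{1/k}` is nondecreasing in the positive integer `k`. -/
theorem estimated_bandwidth_mono {N : ℕ}
    (L : Matrix (Fin N) (Fin N) ℝ) (hL : L.PosSemidef)
    (φ : Fin N → ℝ) (hφ : φ ≠ 0) (k : ℕ) (hk : 1 ≤ k) :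
    ((φ ⬝ᵥ (L ^ k) *ᵥ φ) / (φ ⬝ᵥ φ)) ^ ((1 : ℝ) / k) ≤
      ((φ ⬝ᵥ (L ^ (k + 1)) *ᵥ φ) / (φ ⬝ᵥ φ)) ^ ((1 : ℝ) / (k + 1)) := by
  have hne : φ ⬝ᵥ φ ≠ 0 := fun h => hφ (dotProduct_self_eq_zero.1 h)
  have hnonneg : 0 ≤ φ ⬝ᵥ φ := Finset.sum_nonneg fun i _ => mul_self_nonneg (φ i)
  set c := star (hL.isHermitian.eigenvectorUnitary : Matrix (Fin N) (Fin N) ℝ) *ᵥ φ with hc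
  have hmoment (j : ℕ) : (φ ⬝ᵥ (L ^ j) *ᵥ φ) / (φ ⬝ᵥ φ) =
      ∑ i, c i ^ 2 / (φ ⬝ᵥ φ) * hL.isHermitian.eigenvalues i ^ j := by
    rw [hL.isHermitian.dotProduct_pow_mulVec, Finset.sum_div]
    exact Finset.sum_congr rfl fun i _ => by rw [← hc]; ring
  have hweight : ∑ i, c i ^ 2 / (φ ⬝ᵥ φ) = 1 := by
    simpa [div_self hne] using (hmoment 0).symm
  rw [hmoment, hmoment]
  exact rpow_one_div_sum_mul_pow_le_succ _ _ _ (fun i _ => by positivity) hweight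
    (fun i _ => hL.eigenvalues_nonneg i) hk

end
end

section
/- Let M be a real symmetric N×N matrix and S ⊊ V with S^c nonempty. Then as α → ∞, the smallest eigenvalue of M + α·diag(1_S) converges to the smallest eigenvalue of the principal submatrix M_{S^c}; i.e., the penalized unconstrained eigenvalue problem recovers the constrained (Dirichlet) one in the limit. -/
open Matrix Filter Topology

noncomputable section

/-- The smallest eigenvalue of a matrix, as the infimum of its set of (real) eigenvalues. -/
def smallestEigenvalue {n : Type*} [Fintype n] (A : Matrix n n ℝ) : ℝ :=
  sInf {t : ℝ | ∃ v : n → ℝ, v ≠ 0 ∧ A *ᵥ v = t • v}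

/-- A real symmetric matrix attains its smallest eigenvalue, which bounds its quadratic form. -/
theorem smallestEigenvalue_spec {n : Type*} [Fintype n] [Nonempty n] {A : Matrix n n ℝ}
    (hA : A.IsSymm) :
    (∃ v : n → ℝ, v ≠ 0 ∧ A *ᵥ v = smallestEigenvalue A • v) ∧
      ∀ x : n → ℝ, smallestEigenvalue A * (x ⬝ᵥ x) ≤ x ⬝ᵥ A *ᵥ x := by
  classical
  have eigenpair : ∀ {B : Matrix n n ℝ} (hB : B.IsHermitian) (i : n),
      ∃ v : n → ℝ, v ≠ 0 ∧ B *ᵥ v = hB.eigenvalues i • v := fun hB i =>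
    ⟨hB.eigenvectorBasis i, fun h => hB.eigenvectorBasis.orthonormal.ne_zero i
      (by ext j; exact congrFun h j),
      hB.mulVec_eigenvectorBasis i⟩
  have hAh : A.IsHermitian := by simpa [IsHermitian, conjTranspose_eq_transpose_of_trivial] using hA.eq
  have hfin : {t : ℝ | ∃ v : n → ℝ, v ≠ 0 ∧ A *ᵥ v = t • v}.Finite := by
    refine (Module.End.finite_hasEigenvalue (Matrix.toLin' A)).subset ?_
    rintro t ⟨v, hv, h⟩
    exact Module.End.hasEigenvalue_of_hasEigenvector
      (Module.End.hasEigenvector_iff.mpr ⟨Module.End.mem_eigenspace_iff.mpr (by simpa using h), hv⟩)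
  have hne : {t : ℝ | ∃ v : n → ℝ, v ≠ 0 ∧ A *ᵥ v = t • v}.Nonempty :=
    ⟨_, eigenpair hAh (Classical.arbitrary n)⟩
  refine ⟨hne.csInf_mem hfin, fun x => ?_⟩
  have hB : (A - smallestEigenvalue A • (1 : Matrix n n ℝ)).IsHermitian := by
    simp [IsHermitian, conjTranspose_eq_transpose_of_trivial, hA.eq]
  have hpos : (A - smallestEigenvalue A • (1 : Matrix n n ℝ)).PosSemidef := by
    refine hB.posSemidef_iff_eigenvalues_nonneg.mpr fun i => ?_
    obtain ⟨v, hv, h⟩ := eigenpair hB i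
    have hle : smallestEigenvalue A ≤ hB.eigenvalues i + smallestEigenvalue A := by
      refine csInf_le hfin.bddBelow ⟨v, hv, ?_⟩
      rw [sub_mulVec, smul_mulVec, one_mulVec, sub_eq_iff_eq_add] at h
      rw [h, add_smul]
    simpa using hle
  have h := hpos.dotProduct_mulVec_nonneg x
  rw [star_trivial, sub_mulVec, smul_mulVec, one_mulVec, dotProduct_sub, dotProduct_smul,
    smul_eq_mul] at h
  linarith

/-- A dot product with a vector supported on `T` only involves the coordinates in `T`. -/
theorem dotProduct_eq_comp_val_of_support {n : Type*} [Fintype n] {T : Finset n} {y : n → ℝ}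
    (hy : ∀ i ∉ T, y i = 0) (u : n → ℝ) :
    u ⬝ᵥ y = (fun i : {i // i ∈ T} => u i) ⬝ᵥ fun i : {i // i ∈ T} => y i := by
  classical
  simp only [dotProduct]
  rw [Finset.sum_coe_sort T fun i => u i * y i]
  exact (Finset.sum_subset (Finset.subset_univ T) fun i _ hi => by simp [hy i hi]).symm

/-- The quadratic form of a principal submatrix is that of the matrix on supported vectors. -/
theorem dotProduct_mulVec_eq_submatrix_of_support {n : Type*} [Fintype n] (M : Matrix n n ℝ)
    {T : Finset n} {y : n → ℝ} (hy : ∀ i ∉ T, y i = 0) :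
    y ⬝ᵥ M *ᵥ y = (fun i : {i // i ∈ T} => y i) ⬝ᵥ
      M.submatrix (Subtype.val : {i // i ∈ T} → n) Subtype.val *ᵥ fun i : {i // i ∈ T} => y i := by
  rw [dotProduct_comm, dotProduct_eq_comp_val_of_support hy, dotProduct_comm]
  congr 1
  funext i
  exact dotProduct_eq_comp_val_of_support hy (M i)

/-- Quadratic form of the penalized matrix at a sum of a vector supported off `S` and one
supported on `S`. -/
theorem dotProduct_penalized_mulVec {n : Type*} [Fintype n] [DecidableEq n] {M : Matrix n n ℝ}
    (hM : M.IsSymm) {S : Finset n} (α : ℝ) {y z : n → ℝ} (hy : ∀ i ∈ S, y i = 0)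
    (hz : ∀ i ∉ S, z i = 0) :
    (y + z) ⬝ᵥ (M + α • diagonal fun i => if i ∈ S then (1 : ℝ) else 0) *ᵥ (y + z) =
      y ⬝ᵥ M *ᵥ y + 2 * (y ⬝ᵥ M *ᵥ z) + z ⬝ᵥ M *ᵥ z + α * (z ⬝ᵥ z) := by
  have hD : (diagonal fun i => if i ∈ S then (1 : ℝ) else 0) *ᵥ (y + z) = z := by
    funext i
    by_cases hi : i ∈ S <;> simp [mulVec_diagonal, hi, hy, hz]
  have hyz : y ⬝ᵥ z = 0 := Finset.sum_eq_zero fun i _ => by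
    by_cases hi : i ∈ S <;> simp [hi, hy, hz]
  have hsymm : z ⬝ᵥ M *ᵥ y = y ⬝ᵥ M *ᵥ z := by
    rw [dotProduct_mulVec, ← mulVec_transpose, hM.eq, dotProduct_comm]
  rw [add_mulVec, smul_mulVec, hD]
  simp only [mulVec_add, dotProduct_add, add_dotProduct, dotProduct_smul, smul_eq_mul, hyz, hsymm]
  ring

/-- **The penalized eigenvalue problem recovers the Dirichlet one in the limit.** For a real
symmetric matrix `M` and `S ⊊ V` with nonempty complement, as `α → ∞` the smallest eigenvalue of
`M + α·diag(1_S)` converges to the smallest eigenvalue of the principal submatrix `M_{Sᶜ}`. -/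
theorem penalized_eigenvalue_tendsto {N : ℕ}
    (M : Matrix (Fin N) (Fin N) ℝ) (hM : M.IsSymm)
    (S : Finset (Fin N)) (hS : (Sᶜ : Finset (Fin N)).Nonempty) :
    Tendsto
      (fun α : ℝ =>
        smallestEigenvalue (M + α • Matrix.diagonal (fun i => if i ∈ S then (1 : ℝ) else 0)))
      atTop
      (𝓝 (smallestEigenvalue
        (M.submatrix (Subtype.val : {i // i ∈ Sᶜ} → Fin N) Subtype.val))) := by
  have : Nonempty {i // i ∈ Sᶜ} := hS.to_subtype
  have : Nonempty (Fin N) := ⟨hS.choose⟩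
  set μ := smallestEigenvalue (M.submatrix (Subtype.val : {i // i ∈ Sᶜ} → Fin N) Subtype.val)
    with hμ
  obtain ⟨⟨w, hw, hweig⟩, hsub⟩ := smallestEigenvalue_spec
    (hM.submatrix (Subtype.val : {i // i ∈ Sᶜ} → Fin N))
  rw [← hμ] at hweig hsub
  have hsymm : ∀ α : ℝ,
      (M + α • diagonal (fun i => if i ∈ S then (1 : ℝ) else 0)).IsSymm := fun α =>
    hM.add ((isSymm_diagonal _).smul α)
  have hupper : ∀ α : ℝ, smallestEigenvalue
      (M + α • diagonal (fun i => if i ∈ S then (1 : ℝ) else 0)) ≤ μ := fun α => by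
    let y : Fin N → ℝ := fun i => if h : i ∈ Sᶜ then w ⟨i, h⟩ else 0
    have hy : ∀ i ∉ Sᶜ, y i = 0 := fun i hi => dif_neg hi
    have hyw : (fun i : {i // i ∈ Sᶜ} => y i) = w := funext fun i => dif_pos i.2
    have hray := (smallestEigenvalue_spec (hsymm α)).2 (y + 0)
    rw [dotProduct_penalized_mulVec hM α (fun i hi => hy i (by simpa using hi)) (by simp), add_zero,
      dotProduct_mulVec_eq_submatrix_of_support M hy, dotProduct_eq_comp_val_of_support hy, hyw,
      hweig] at hray
    have hpos : 0 < w ⬝ᵥ w := by simpa using dotProduct_star_self_pos_iff.mpr hw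
    simp only [dotProduct_smul, smul_eq_mul, mulVec_zero, dotProduct_zero, mul_zero,
      add_zero] at hray
    exact le_of_mul_le_mul_right hray hpos
  have hMbound := (smallestEigenvalue_spec hM).2
  have hgram : (-(Mᵀ * M)).IsSymm := (isSymm_transpose_mul_self M).neg
  have hgrambound := (smallestEigenvalue_spec hgram).2
  set l := smallestEigenvalue M
  set k := smallestEigenvalue (-(Mᵀ * M))
  have hlower : ∀ ε > 0, ∀ α ≥ μ - ε - l - k / ε, μ - ε ≤ smallestEigenvalue
      (M + α • diagonal (fun i => if i ∈ S then (1 : ℝ) else 0)) := fun ε hε α hα => by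
    obtain ⟨x, hx, hxeig⟩ := (smallestEigenvalue_spec (hsymm α)).1
    let y : Fin N → ℝ := fun i => if i ∈ S then 0 else x i
    let z : Fin N → ℝ := fun i => if i ∈ S then x i else 0
    have hy : ∀ i ∈ S, y i = 0 := fun i hi => if_pos hi
    have hz : ∀ i ∉ S, z i = 0 := fun i hi => if_neg hi
    have hy' : ∀ i ∉ Sᶜ, y i = 0 := fun i hi => hy i (by simpa using hi)
    have hxyz : x = y + z := funext fun i => by by_cases hi : i ∈ S <;> simp [y, z, hi]
    have hnorm : x ⬝ᵥ x = y ⬝ᵥ y + z ⬝ᵥ z := by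
      simp only [dotProduct, ← Finset.sum_add_distrib]
      exact Finset.sum_congr rfl fun i _ => by by_cases hi : i ∈ S <;> simp [y, z, hi]
    have hquad := dotProduct_penalized_mulVec hM α hy hz
    rw [← hxyz, hxeig, dotProduct_smul, smul_eq_mul] at hquad
    have hyy : μ * (y ⬝ᵥ y) ≤ y ⬝ᵥ M *ᵥ y := by
      rw [dotProduct_mulVec_eq_submatrix_of_support M hy', dotProduct_eq_comp_val_of_support hy']
      exact hsub _
    have hMz : (M *ᵥ z) ⬝ᵥ (M *ᵥ z) ≤ -k * (z ⬝ᵥ z) := by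
      have h := hgrambound z
      rw [neg_mulVec, dotProduct_neg, ← mulVec_mulVec, dotProduct_mulVec, vecMul_transpose] at h
      linarith
    have hcross : -(ε * (y ⬝ᵥ y)) + k / ε * (z ⬝ᵥ z) ≤ 2 * (y ⬝ᵥ M *ᵥ z) := by
      have hsq : 0 ≤ (ε • y + M *ᵥ z) ⬝ᵥ (ε • y + M *ᵥ z) := by
        simpa using dotProduct_star_self_nonneg (ε • y + M *ᵥ z)
      simp only [dotProduct_add, add_dotProduct, dotProduct_smul, smul_dotProduct, smul_eq_mul,
        dotProduct_comm (M *ᵥ z) y] at hsq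
      refine le_of_mul_le_mul_left ?_ hε
      have hk : ε * (k / ε * (z ⬝ᵥ z)) = k * (z ⬝ᵥ z) := by field_simp
      rw [mul_add, hk]
      linarith
    have hzz : 0 ≤ z ⬝ᵥ z := by simpa using dotProduct_star_self_nonneg z
    have hpos : 0 < x ⬝ᵥ x := by simpa using dotProduct_star_self_pos_iff.mpr hx
    have hαz := mul_le_mul_of_nonneg_right hα hzz
    refine le_of_mul_le_mul_right ?_ hpos
    rw [hquad, hnorm]
    linarith [hMbound z]
  refine tendsto_order.mpr ⟨fun a ha => ?_, fun a ha => .of_forall fun α => (hupper α).trans_lt ha⟩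
  filter_upwards [eventually_ge_atTop (μ - (μ - a) / 2 - l - k / ((μ - a) / 2))] with α hα
  linarith [hlower ((μ - a) / 2) (by linarith) α hα]

end
end

section
/- Let S ⊆ V, ω ≥ 0 with ω < ω_c(S) = inf{ω(φ) : φ ∈ L2(S^c), φ ≠ 0}, and f ∈ PW_ω(G). Define C_1 = {x ∈ R^N : x(i) = f(i) for all i ∈ S} and C_2 = PW_ω(G). Then C_1 ∩ C_2 = {f}; i.e., f is the unique ω-bandlimited signal consistent with the given samples on S. -/
open Matrix

noncomputable section

/-- A signal in `PW_ω(G)` is orthogonal to every eigenvector with eigenvalue above `ω`. -/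
theorem dotProduct_eq_zero_of_mem_PW {N : ℕ} {lam : Fin N → ℝ} {u : Fin N → Fin N → ℝ}
    (horth : ∀ i j, u i ⬝ᵥ u j = if i = j then (1 : ℝ) else 0) {ω : ℝ} {φ : Fin N → ℝ}
    (hφ : φ ∈ PW lam u ω) {i : Fin N} (hi : ω < lam i) : φ ⬝ᵥ u i = 0 := by
  induction hφ using Submodule.span_induction with
  | mem x hx =>
    obtain ⟨j, hj, rfl⟩ := hx
    have hji : j ≠ i := by
      rintro rfl
      exact not_lt_of_ge hj hi
    rw [horth, if_neg hji]
  | zero => exact zero_dotProduct _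
  | add x y _ _ hx hy => rw [add_dotProduct, hx, hy, add_zero]
  | smul a x _ hx => rw [smul_dotProduct, hx, smul_zero]

/-- A signal in `PW_ω(G)` has bandwidth at most `ω`. -/
theorem bandwidth_le_of_mem_PW {N : ℕ} {lam : Fin N → ℝ} {u : Fin N → Fin N → ℝ}
    (horth : ∀ i j, u i ⬝ᵥ u j = if i = j then (1 : ℝ) else 0) {ω : ℝ} (hω : 0 ≤ ω)
    {φ : Fin N → ℝ} (hφ : φ ∈ PW lam u ω) : bandwidth lam u φ ≤ ω := by
  refine Real.sSup_le ?_ hω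
  rintro _ ⟨i, rfl, hi⟩
  exact le_of_not_gt fun h => hi (dotProduct_eq_zero_of_mem_PW horth hφ h)

/-- **Uniqueness of the bandlimited signal consistent with the samples.** If `ω < ω_c(S)` and
`f ∈ PW_ω(G)`, then the set of signals agreeing with `f` on `S` (the set `C₁`) intersects
`PW_ω(G)` (the set `C₂`) exactly in `{f}`. -/
theorem bandlimited_consistent_unique {N : ℕ}
    (L : Matrix (Fin N) (Fin N) ℝ) (hsymm : L.IsSymm)
    (lam : Fin N → ℝ) (u : Fin N → Fin N → ℝ)
    (hlam_nonneg : ∀ i, 0 ≤ lam i) (hlam_mono : Monotone lam)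
    (heig : ∀ i, L *ᵥ u i = lam i • u i)
    (horth : ∀ i j, u i ⬝ᵥ u j = if i = j then (1 : ℝ) else 0)
    (S : Set (Fin N)) (ω : ℝ) (hω : 0 ≤ ω)
    (hcut : (ω : EReal) < cutoffFreq lam u S)
    (f : Fin N → ℝ) (hf : f ∈ PW lam u ω) :
    {x : Fin N → ℝ | ∀ i ∈ S, x i = f i} ∩ (PW lam u ω : Set (Fin N → ℝ)) = {f} := by
  refine Set.Subset.antisymm ?_ (Set.singleton_subset_iff.2 ⟨fun _ _ => rfl, hf⟩)
  rintro x ⟨hxS, hx⟩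
  by_contra hne
  have hle : cutoffFreq lam u S ≤ (bandwidth lam u (x - f) : EReal) :=
    sInf_le ⟨x - f, sub_ne_zero.2 hne, fun i hi => sub_eq_zero.2 (hxS i hi), rfl⟩
  have hbw := bandwidth_le_of_mem_PW horth hω (Submodule.sub_mem _ hx hf)
  exact absurd (hcut.trans_le hle) (not_lt_of_ge (EReal.coe_le_coe_iff.2 hbw))

end
end
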